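/- Let D = (1/2)·∑_x |p_x − p̃_x| be the total variation distance between the target quasi-probability mixture p and the signed empirical estimator p̃ built from N i.i.d. samples. Then for every t > 0, P( |D − E[D]| ≥ t ) ≤ 2·exp( −N·t² / (2γ²) ). (Concentration of the total variation distance via the bounded-differences inequality: changing any single sample changes D by at most 2γ/N.) -/

import Mathlib

open MeasureTheory Finset

lemma aux_integral_succ {k n : ℕ} (μ : Measure (Fin k)) [IsProbabilityMeasure μ]
    (F : (Fin (n + 1) → Fin k) → ℝ) :
    ∫ ω, F ω ∂(Measure.pi fun _ : Fin (n + 1) => μ)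
      = ∫ ω, (∫ x, F (Fin.cons x ω) ∂μ) ∂(Measure.pi fun _ : Fin n => μ) := by
  rw [← ((measurePreserving_piFinSuccAbove (fun _ : Fin (n + 1) => μ) 0).symm).integral_comp']
  rw [integral_prod_symm _ Integrable.of_finite]
  simp_rw [MeasurableEquiv.piFinSuccAbove_symm_apply, Fin.insertNthEquiv, Equiv.coe_fn_mk,
    Fin.insertNth_zero]
  rfl

lemma aux_hoeffding {k : ℕ} (μ : Measure (Fin k)) [IsProbabilityMeasure μ]
    (f : Fin k → ℝ) (c : ℝ) (hc : 0 ≤ c) (h : ∀ x y, |f x - f y| ≤ c) (s : ℝ) :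
    ∫ x, Real.exp (s * (f x - ∫ y, f y ∂μ)) ∂μ ≤ Real.exp (c ^ 2 * s ^ 2 / 8) := by
  haveI : Nonempty (Fin k) := μ.nonempty_of_neZero
  obtain ⟨x0, hx0⟩ := Finite.exists_min f
  have := (ProbabilityTheory.hasSubgaussianMGF_of_mem_Icc (μ := μ) (X := f) (a := f x0)
    (b := f x0 + c) (measurable_of_finite f).aemeasurable
    (ae_of_all _ fun x => ⟨hx0 x, by linarith [(abs_le.1 (h x x0)).2]⟩)).mgf_le s
  rw [ProbabilityTheory.mgf] at this
  refine this.trans (le_of_eq ?_)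
  congr 1
  push_cast
  rw [add_sub_cancel_left, Real.norm_eq_abs, div_pow, sq_abs]
  ring

lemma aux_mcdiarmid {k : ℕ} (μ : Measure (Fin k)) [IsProbabilityMeasure μ]
    (c : ℝ) (hc : 0 ≤ c) (s : ℝ) (n : ℕ) : ∀ (F : (Fin n → Fin k) → ℝ)
    (_ : ∀ ω i a, |F (Function.update ω i a) - F ω| ≤ c),
    ∫ ω, Real.exp (s * (F ω - ∫ ω', F ω' ∂(Measure.pi fun _ : Fin n => μ)))
      ∂(Measure.pi fun _ : Fin n => μ) ≤ Real.exp (n * (c ^ 2 * s ^ 2 / 8)) := by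
  induction n with
  | zero =>
    intro F h
    have : ∀ ω, F ω = F Fin.elim0 := fun ω => by congr 1; exact Subsingleton.elim _ _
    simp [this]
  | succ n ih =>
    intro F h
    rw [aux_integral_succ μ F, aux_integral_succ]
    set G : (Fin n → Fin k) → ℝ := fun ω => ∫ x, F (Fin.cons x ω) ∂μ with hG
    have hGd : ∀ ω i a, |G (Function.update ω i a) - G ω| ≤ c := by
      intro ω i a
      simp only [hG]
      rw [← integral_sub Integrable.of_finite Integrable.of_finite, ← Real.norm_eq_abs]
      refine (norm_integral_le_of_norm_le_const (C := c) (ae_of_all _ fun x => ?_)).trans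
        (by simp)
      rw [Real.norm_eq_abs, Fin.cons_update]
      exact h _ _ _
    have key : ∀ ω, ∫ x, Real.exp (s * (F (Fin.cons x ω)
          - ∫ ω', G ω' ∂(Measure.pi fun _ : Fin n => μ))) ∂μ ≤
        Real.exp (c ^ 2 * s ^ 2 / 8) * Real.exp (s * (G ω
          - ∫ ω', G ω' ∂(Measure.pi fun _ : Fin n => μ))) := by
      intro ω
      have e : ∀ x, Real.exp (s * (F (Fin.cons x ω)
          - ∫ ω', G ω' ∂(Measure.pi fun _ : Fin n => μ))) =
          Real.exp (s * (F (Fin.cons x ω) - G ω)) * Real.exp (s * (G ω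
          - ∫ ω', G ω' ∂(Measure.pi fun _ : Fin n => μ))) := by
        intro x
        rw [← Real.exp_add]; congr 1; ring
      simp_rw [e]
      rw [integral_mul_const]
      refine mul_le_mul_of_nonneg_right ?_ (Real.exp_pos _).le
      refine aux_hoeffding μ (fun x => F (Fin.cons x ω)) c hc (fun x y => ?_) s
      have := h (Fin.cons y ω) 0 x
      rwa [Fin.update_cons_zero] at this
    refine (integral_mono Integrable.of_finite Integrable.of_finite key).trans ?_
    rw [integral_const_mul]
    refine (mul_le_mul_of_nonneg_left (ih G hGd) (Real.exp_pos _).le).trans (le_of_eq ?_)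
    rw [← Real.exp_add]; congr 1; push_cast; ring

lemma aux_tail {k : ℕ} (μ : Measure (Fin k)) [IsProbabilityMeasure μ]
    (c : ℝ) (hc : 0 ≤ c) (n : ℕ) (F : (Fin n → Fin k) → ℝ)
    (h : ∀ ω i a, |F (Function.update ω i a) - F ω| ≤ c) (t : ℝ) (ht : 0 < t) :
    (Measure.pi fun _ : Fin n => μ)
      {ω | |F ω - ∫ ω', F ω' ∂(Measure.pi fun _ : Fin n => μ)| ≥ t}
      ≤ ENNReal.ofReal (2 * Real.exp (- t ^ 2 / (2 * (n * c ^ 2 / 4)))) := by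
  set P := Measure.pi fun _ : Fin n => μ with hP
  have hs : ProbabilityTheory.HasSubgaussianMGF (fun ω => F ω - ∫ ω', F ω' ∂P)
      (Real.toNNReal (n * c ^ 2 / 4)) P := by
    refine ⟨fun s => Integrable.of_finite, fun s => ?_⟩
    rw [ProbabilityTheory.mgf]
    refine (aux_mcdiarmid μ c hc s n F h).trans (le_of_eq ?_)
    rw [Real.coe_toNNReal _ (by positivity)]
    congr 1; ring
  have h1 := hs.measure_ge_le ht.le
  have h2 := hs.neg.measure_ge_le ht.le
  rw [Real.coe_toNNReal _ (by positivity)] at h1 h2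
  rw [← ofReal_measureReal (measure_ne_top _ _)]
  apply ENNReal.ofReal_le_ofReal
  refine (measureReal_mono (s₂ := {ω | t ≤ F ω - ∫ ω', F ω' ∂P} ∪
    {ω | t ≤ (-fun ω => F ω - ∫ ω', F ω' ∂P) ω}) ?_ (measure_ne_top _ _)).trans
    ((measureReal_union_le _ _).trans (by linarith))
  intro ω hω
  rcases le_abs.1 (show t ≤ |F ω - ∫ ω', F ω' ∂P| from hω) with h | h
  · exact Or.inl h
  · exact Or.inr h

lemma aux_null {Ω : Type*} [Fintype Ω] [DecidableEq Ω] [MeasurableSpace Ω] (μ : Measure Ω)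
    [IsProbabilityMeasure μ] (h : ∑ a, μ {a} ≤ 1) (a : Ω) : NullMeasurableSet {a} μ := by
  have hcov : ∀ s : Finset Ω, μ (s : Set Ω) ≤ ∑ b ∈ s, μ {b} := fun s => by
    have := measure_biUnion_finset_le (μ := μ) s (fun b => ({b} : Set Ω))
    rwa [show (⋃ i ∈ s, ({i} : Set Ω)) = (s : Set Ω) by ext; simp] at this
  have hz : ∀ b ∈ toMeasurable μ {a}, b ≠ a → μ {b} = 0 := by
    intro b hb hba
    have h1 : (1 : ENNReal) ≤ ∑ x ∈ univ.erase b, μ {x} := by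
      rw [← measure_univ (μ := μ), ← add_sum_erase (univ.erase b) _ (a := a) (by simp [hba.symm]),
        ← measure_toMeasurable {a}]
      refine le_trans (measure_mono (t := toMeasurable μ {a} ∪
        (((univ.erase b).erase a : Finset Ω) : Set Ω)) ?_) ((measure_union_le _ _).trans ?_)
      · intro x _
        by_cases hx : x = b
        · exact Or.inl (hx ▸ hb)
        by_cases hx' : x = a
        · exact Or.inl (hx' ▸ subset_toMeasurable μ {a} rfl)
        · right; simp [hx, hx']
      · gcongr; exact hcov _
    rw [← add_sum_erase univ _ (mem_univ b)] at h
    have hf : ∑ x ∈ univ.erase b, μ {x} ≠ ⊤ := by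
      exact ENNReal.sum_ne_top.2 fun _ _ => measure_ne_top _ _
    have h3 := h.trans h1
    nth_rw 2 [← zero_add (∑ x ∈ univ.erase b, μ {x})] at h3
    exact le_antisymm ((ENNReal.add_le_add_iff_right hf).1 h3) zero_le
  have hd : μ (toMeasurable μ {a} \ {a}) = 0 := by
    rw [← Set.biUnion_of_singleton (toMeasurable μ {a} \ {a})]
    rw [measure_biUnion_null_iff (Set.to_countable _)]
    exact fun b hb => hz b hb.1 hb.2
  have hd' : ({a} : Set Ω) =ᵐ[μ] toMeasurable μ {a} := by
    refine (subset_toMeasurable μ {a}).eventuallyLE.antisymm ?_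
    rw [ae_le_set]; exact hd
  exact (measurableSet_toMeasurable μ {a}).nullMeasurableSet.congr hd'.symm

lemma aux_general {Ω : Type*} [Fintype Ω] [DecidableEq Ω] [MeasurableSpace Ω] (μ : Measure Ω)
    [IsProbabilityMeasure μ] (hμ : ∑ a, μ {a} ≤ 1)
    (c : ℝ) (hc : 0 ≤ c) (n : ℕ) (F : (Fin n → Ω) → ℝ)
    (h : ∀ ω i a, |F (Function.update ω i a) - F ω| ≤ c) (t : ℝ) (ht : 0 < t) :
    (Measure.pi fun _ : Fin n => μ)
      {ω | |F ω - ∫ ω', F ω' ∂(Measure.pi fun _ : Fin n => μ)| ≥ t}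
      ≤ ENNReal.ofReal (2 * Real.exp (- t ^ 2 / (2 * (n * c ^ 2 / 4)))) := by
  let e := Fintype.equivFin Ω
  have he : AEMeasurable e μ := by
    refine NullMeasurable.aemeasurable fun s _ => ?_
    rw [← Set.biUnion_of_singleton (e ⁻¹' s)]
    exact NullMeasurableSet.biUnion (Set.to_countable _) fun b _ => aux_null μ hμ b
  haveI := Measure.isProbabilityMeasure_map he
  have hE : AEMeasurable (fun (ω : Fin n → Ω) i => e (ω i)) (Measure.pi fun _ : Fin n => μ) := by
    refine aemeasurable_pi_lambda _ fun i => ?_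
    exact he.comp_quasiMeasurePreserving (Measure.quasiMeasurePreserving_eval _ i)
  have hmap := Measure.pi_map_pi (μ := fun _ : Fin n => μ) (f := fun _ => e) (fun _ => he)
  let F' : (Fin n → Fin (Fintype.card Ω)) → ℝ := fun ω => F (fun i => e.symm (ω i))
  have hFF : ∀ ω, F ω = F' (fun i => e (ω i)) := fun ω => by simp [F']
  have hb := aux_tail (μ.map e) c hc n F' (fun ω i a => by
    have := h (fun i => e.symm (ω i)) i (e.symm a)
    have e2 : (fun j => e.symm (Function.update ω i a j))
        = Function.update (fun i => e.symm (ω i)) i (e.symm a) := by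
      funext j
      by_cases hj : j = i
      · subst hj; simp
      · simp [hj]
    simp only [F']
    rw [e2]
    exact this) t ht
  rw [← hmap, integral_map hE (measurable_of_finite F').aestronglyMeasurable,
    Measure.map_apply_of_aemeasurable hE (Set.toFinite _).measurableSet] at hb
  simpa [hFF] using hb

/-- Concentration of the total variation distance via the bounded-differences
inequality: with `D = (1/2)·∑_x |p_x − p̃_x|` the total variation distance between
the target quasi-probability mixture `p` and the signed empirical estimator `p̃`
built from `N` i.i.d. samples, for every `t > 0`,
`P(|D − E[D]| ≥ t) ≤ 2·exp(−N·t²/(2γ²))`. -/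
theorem tv_distance_concentration
    {ι : Type*} [Fintype ι] [DecidableEq ι] [MeasurableSpace ι]
    (pp pm : ι → ℝ)
    (hpp0 : ∀ x, 0 ≤ pp x) (hpp1 : ∑ x, pp x = 1)
    (hpm0 : ∀ x, 0 ≤ pm x) (hpm1 : ∑ x, pm x = 1)
    (cp cm : ℝ) (hcp : 0 ≤ cp) (hcm : 0 ≤ cm) (hc : cp - cm = 1)
    (γ : ℝ) (hγ : γ = cp + cm)
    (p : ι → ℝ) (hp : ∀ x, p x = cp * pp x - cm * pm x)
    (hp0 : ∀ x, 0 ≤ p x)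
    (q : ι → ℝ) (hq : ∀ x, q x = (cp * pp x + cm * pm x) / γ)
    (μ1 : Measure (ι × Bool)) [IsProbabilityMeasure μ1]
    (hμt : ∀ x, μ1 {(x, true)} = ENNReal.ofReal (cp * pp x / γ))
    (hμf : ∀ x, μ1 {(x, false)} = ENNReal.ofReal (cm * pm x / γ))
    (N : ℕ) (hN : 0 < N)
    (D : (Fin N → ι × Bool) → ℝ)
    (hD : ∀ ω, D ω = (1 / 2) * ∑ x, |p x - (γ / N) *
        ∑ i, (if (ω i).1 = x then (if (ω i).2 then (1 : ℝ) else -1) else 0)|)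
    (t : ℝ) (ht : 0 < t) :
    (Measure.pi fun _ : Fin N => μ1)
        {ω | |D ω - ∫ ω', D ω' ∂(Measure.pi fun _ : Fin N => μ1)| ≥ t}
      ≤ ENNReal.ofReal (2 * Real.exp (-(N : ℝ) * t ^ 2 / (2 * γ ^ 2))) := by
  have hγ1 : 0 < γ := by linarith
  have hN' : (0 : ℝ) < N := by exact_mod_cast hN
  have hsum : ∑ a, μ1 {a} ≤ 1 := by
    rw [Fintype.sum_prod_type]
    simp only [Fintype.sum_bool, hμt, hμf]
    have h0 : ∀ x, 0 ≤ cp * pp x / γ := fun x => div_nonneg (mul_nonneg hcp (hpp0 x)) hγ1.le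
    have h1 : ∀ x, 0 ≤ cm * pm x / γ := fun x => div_nonneg (mul_nonneg hcm (hpm0 x)) hγ1.le
    simp_rw [← ENNReal.ofReal_add (h0 _) (h1 _)]
    rw [← ENNReal.ofReal_sum_of_nonneg fun x _ => add_nonneg (h0 x) (h1 x), sum_add_distrib,
      ← sum_div, ← sum_div, ← mul_sum, ← mul_sum, hpp1, hpm1, mul_one, mul_one, ← add_div,
      ← hγ, div_self hγ1.ne', ENNReal.ofReal_one]
  let v : ι × Bool → ι → ℝ := fun a x => if a.1 = x then (if a.2 then (1 : ℝ) else -1) else 0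
  have hv : ∀ a, ∑ x, |v a x| = 1 := by
    intro a
    rw [Finset.sum_eq_single a.1]
    · rcases a with ⟨a, b⟩
      cases b <;> simp [v]
    · intro b _ hb
      simp [v, hb.symm]
    · simp
  have hdiff : ∀ ω i a, |D (Function.update ω i a) - D ω| ≤ 2 * γ / N := by
    intro ω i a
    have hx : ∀ x, |(|p x - (γ / N) * ∑ j, v (Function.update ω i a j) x|
        - |p x - (γ / N) * ∑ j, v (ω j) x|)| ≤ (γ / N) * (|v a x| + |v (ω i) x|) := by
      intro x
      refine (abs_abs_sub_abs_le_abs_sub _ _).trans ?_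
      have e : ∑ j, v (Function.update ω i a j) x - ∑ j, v (ω j) x = v a x - v (ω i) x := by
        rw [← sum_sub_distrib, Finset.sum_eq_single i]
        · simp
        · intro j _ hj
          simp [hj]
        · simp
      rw [show p x - (γ / N) * ∑ j, v (Function.update ω i a j) x
        - (p x - (γ / N) * ∑ j, v (ω j) x) = -((γ / N) * (v a x - v (ω i) x)) by
          rw [← e]; ring, abs_neg, abs_mul, abs_of_pos (div_pos hγ1 hN')]
      exact mul_le_mul_of_nonneg_left (abs_sub _ _) (div_pos hγ1 hN').le
    rw [hD, hD, ← mul_sub, ← sum_sub_distrib, abs_mul]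
    have := (abs_sum_le_sum_abs _ _).trans (sum_le_sum fun x (_ : x ∈ univ) => hx x)
    rw [← mul_sum, sum_add_distrib, hv, hv] at this
    refine (mul_le_mul_of_nonneg_left this (abs_nonneg _)).trans ?_
    rw [abs_of_pos (by norm_num)]
    have : 0 < γ / N := div_pos hγ1 hN'
    rw [mul_div_assoc]
    linarith
  have := aux_general μ1 hsum (2 * γ / N) (by positivity) N D hdiff t ht
  refine this.trans (le_of_eq ?_)
  congr 3
  field_simp
  norm_num
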